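/- arXiv:2501.18028 — 4 statements merged into one kernel-verified Lean document; each statement's English description precedes it below -/
import Mathlib

section
/- For any n d : ℕ, any data X : Fin n → Fin d → ℝ and any rows i k : Fin n, the Gini prametric is non-negative: d_G(X, i, k) ≥ 0. -/
/-- Ascending counting rank of entry `(i,j)` of the data matrix `X`, cast to `ℝ`. -/
noncomputable def R {n d : ℕ} (X : Fin n → Fin d → ℝ) (i : Fin n) (j : Fin d) : ℝ :=
  ((Finset.univ.filter (fun k : Fin n => X k j ≤ X i j)).card : ℝ)

/-- The Gini prametric between rows `i` and `k` of `X`. -/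
noncomputable def dG {n d : ℕ} (X : Fin n → Fin d → ℝ) (i k : Fin n) : ℝ :=
  ∑ j : Fin d, (X i j - X k j) * (R X i j - R X k j)

/-- Ranks are monotone in the entry, because the sets being counted are nested. -/
theorem R_mono {n d : ℕ} (X : Fin n → Fin d → ℝ) {i k : Fin n} {j : Fin d}
    (h : X i j ≤ X k j) : R X i j ≤ R X k j := by
  unfold R
  exact_mod_cast Finset.card_le_card
    (Finset.monotone_filter_right _ fun _ _ hl => le_trans hl h)

/-- Non-Negativity of the Gini prametric. -/
theorem gini_prametric_nonneg (n d : ℕ) (X : Fin n → Fin d → ℝ) (i k : Fin n) :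
    0 ≤ dG X i k := by
  refine Finset.sum_nonneg fun j _ => ?_
  -- Within one feature, both factors have the same sign by monotonicity of the rank.
  rcases le_total (X i j) (X k j) with h | h
  · exact mul_nonneg_of_nonpos_of_nonpos (sub_nonpos.2 h) (sub_nonpos.2 (R_mono X h))
  · exact mul_nonneg (sub_nonneg.2 h) (sub_nonneg.2 (R_mono X h))
end

section
/- For any n d : ℕ, any real ν > 1, any data X : Fin n → Fin d → ℝ and any rows i k : Fin n, the generalized Gini prametric is non-negative: d_{G,ν}(X, i, k) ≥ 0. -/
/-!
The descending rank is antitone in the entry: a larger entry is dominated by fewer rows. As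
`t ↦ t ^ (ν - 1)` is monotone on `[0, ∞)`, in each column the difference of the entries and the
difference of the powered ranks have opposite signs, so every summand is nonpositive.
-/

/-- Descending counting rank of entry `(i,j)` of the data matrix `X`, cast to `ℝ`. -/
noncomputable def Rbar {n d : ℕ} (X : Fin n → Fin d → ℝ) (i : Fin n) (j : Fin d) : ℝ :=
  ((Finset.univ.filter (fun k : Fin n => X i j ≤ X k j)).card : ℝ)

/-- The generalized Gini prametric with parameter `ν` between rows `i` and `k` of `X`,
where powers are real powers (`Real.rpow`). -/
noncomputable def dGnu {n d : ℕ} (ν : ℝ) (X : Fin n → Fin d → ℝ) (i k : Fin n) : ℝ :=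
  -∑ j : Fin d, (X i j - X k j) * (Rbar X i j ^ (ν - 1) - Rbar X k j ^ (ν - 1))

theorem Rbar_rpow_le_of_le {n d : ℕ} {ν : ℝ} (hν : 1 < ν) (X : Fin n → Fin d → ℝ) {i k : Fin n}
    {j : Fin d} (h : X i j ≤ X k j) : Rbar X k j ^ (ν - 1) ≤ Rbar X i j ^ (ν - 1) := by
  refine Real.rpow_le_rpow (Nat.cast_nonneg _) ?_ (by linarith)
  refine Nat.cast_le.mpr (Finset.card_le_card fun l hl => ?_)
  simp only [Finset.mem_filter, Finset.mem_univ, true_and] at hl ⊢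
  exact h.trans hl

/-- Non-Negativity of the generalized Gini prametric. -/
theorem generalized_gini_prametric_nonneg (n d : ℕ) (ν : ℝ) (hν : 1 < ν)
    (X : Fin n → Fin d → ℝ) (i k : Fin n) :
    0 ≤ dGnu ν X i k := by
  refine neg_nonneg.mpr (Finset.sum_nonpos fun j _ => ?_)
  rcases le_total (X i j) (X k j) with h | h
  · exact mul_nonpos_of_nonpos_of_nonneg (sub_nonpos.mpr h)
      (sub_nonneg.mpr (Rbar_rpow_le_of_le hν X h))
  · exact mul_nonpos_of_nonneg_of_nonpos (sub_nonneg.mpr h)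
      (sub_nonpos.mpr (Rbar_rpow_le_of_le hν X h))
end

section
/- Let μ be a probability measure on ℝ with no atoms (μ {x} = 0 for every x : ℝ) such that the identity function is integrable with respect to μ, and let F(x) = (μ (Set.Iic x)).toReal be its cumulative distribution function. Then the Gini Mean Difference of μ satisfies ∫ ∫ |x − y| ∂μ(y) ∂μ(x) = 4 ∫ x * F(x) ∂μ(x) − 2 ∫ x ∂μ(x); equivalently, since ∫ F(x) ∂μ(x) = 1/2, the expected absolute difference of two independent draws from μ equals 4 Cov(X, F(X)) where Cov(X, F(X)) = ∫ x F(x) ∂μ(x) − (∫ x ∂μ(x)) * (∫ F(x) ∂μ(x)). -/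
/-!
Pointwise, `|x - y| = 2 x 𝟙(y ≤ x) - 2 y 𝟙(y ≤ x) - x + y`. Integrating in `y`, then in `x`,
the last two terms cancel and the first gives `2 ∫ x F(x)`. By Fubini
(`integral_integral_indicator_Iic`) the second is `-2 ∫ y μ(Ici y)`, and the absence of atoms gives
`μ(Ici y) = 1 - F(y)`. The same Fubini identity with the constant function `1` in place of `y`
reads `∫ F = ∫ (1 - F)`, so `∫ F = 1/2`.
-/

open MeasureTheory

lemma integrable_prod_indicator_Iic (μ : Measure ℝ) [IsProbabilityMeasure μ]
    {g : ℝ → ℝ} (hg : Integrable g μ) :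
    Integrable (fun p : ℝ × ℝ => (Set.Iic p.1).indicator g p.2) (μ.prod μ) := by
  have h : Integrable (fun p : ℝ × ℝ => g p.2) (μ.prod μ) := hg.comp_snd μ
  have hs : MeasurableSet {p : ℝ × ℝ | p.2 ≤ p.1} :=
    measurableSet_le measurable_snd measurable_fst
  exact h.indicator hs

lemma toReal_Ici_eq (μ : Measure ℝ) [IsProbabilityMeasure μ]
    (hatoms : ∀ x : ℝ, μ {x} = 0) (y : ℝ) :
    μ.real (Set.Ici y) = 1 - (μ (Set.Iic y)).toReal := by
  have : NullSingletonClass μ := ⟨hatoms⟩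
  have h : μ.real (Set.Ici y) = μ.real (Set.Ioi y) :=
    measureReal_congr Ioi_ae_eq_Ici.symm
  rw [h, ← Set.compl_Iic, probReal_compl_eq_one_sub measurableSet_Iic]
  rfl

lemma integral_integral_indicator_Iic (μ : Measure ℝ) [IsProbabilityMeasure μ]
    (hatoms : ∀ x : ℝ, μ {x} = 0) {g : ℝ → ℝ} (hg : Integrable g μ) :
    ∫ x, ∫ y, (Set.Iic x).indicator g y ∂μ ∂μ
      = ∫ y, g y * (1 - (μ (Set.Iic y)).toReal) ∂μ := by
  rw [integral_integral_swap (integrable_prod_indicator_Iic μ hg)]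
  congr 1 with y
  have h : (fun x : ℝ => (Set.Iic x).indicator g y)
      = (Set.Ici y).indicator (fun _ => g y) := by
    ext x
    simp [Set.indicator_apply]
  rw [h, integral_indicator measurableSet_Ici, setIntegral_const, toReal_Ici_eq μ hatoms,
    smul_eq_mul, mul_comm]

lemma integrable_mul_cdf (μ : Measure ℝ) [IsProbabilityMeasure μ]
    {g : ℝ → ℝ} (hg : Integrable g μ) :
    Integrable (fun x => g x * (μ (Set.Iic x)).toReal) μ := by
  have hmono : Monotone fun x : ℝ => (μ (Set.Iic x)).toReal := fun a b hab =>
    ENNReal.toReal_mono (measure_ne_top _ _) (measure_mono (Set.Iic_subset_Iic.2 hab))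
  refine hg.mul_bdd (c := 1) hmono.measurable.aestronglyMeasurable (ae_of_all _ fun x => ?_)
  rw [Real.norm_of_nonneg ENNReal.toReal_nonneg]
  exact measureReal_le_one

/-- For an atomless probability measure `μ` on `ℝ` with integrable identity, the
Gini Mean Difference `∫∫ |x − y| dμ dμ` equals `4 ∫ x F(x) dμ − 2 ∫ x dμ` where
`F` is the c.d.f. of `μ`; moreover `∫ F dμ = 1/2`, so the expected absolute
difference of two independent draws equals `4 Cov(X, F(X))`. -/
theorem gmd_eq_four_cov (μ : Measure ℝ) [IsProbabilityMeasure μ]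
    (hatoms : ∀ x : ℝ, μ {x} = 0) (hint : Integrable (fun x : ℝ => x) μ) :
    (∫ x, ∫ y, |x - y| ∂μ ∂μ)
        = 4 * ∫ x, x * (μ (Set.Iic x)).toReal ∂μ - 2 * ∫ x, x ∂μ ∧
    (∫ x, (μ (Set.Iic x)).toReal ∂μ) = 1 / 2 ∧
    (∫ x, ∫ y, |x - y| ∂μ ∂μ)
        = 4 * ((∫ x, x * (μ (Set.Iic x)).toReal ∂μ)
            - (∫ x, x ∂μ) * (∫ x, (μ (Set.Iic x)).toReal ∂μ)) := by
  have hone : Integrable (fun _ : ℝ => (1 : ℝ)) μ := integrable_const 1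
  have hF : Integrable (fun x => (μ (Set.Iic x)).toReal) μ := by
    simpa using integrable_mul_cdf μ hone
  have hxF := integrable_mul_cdf μ hint
  have hhalf : (∫ x, (μ (Set.Iic x)).toReal ∂μ) = 1 / 2 := by
    have h := integral_integral_indicator_Iic μ hatoms hone
    have h1 : ∀ x : ℝ, ∫ y, (Set.Iic x).indicator (fun _ : ℝ => (1 : ℝ)) y ∂μ
        = (μ (Set.Iic x)).toReal := fun x => by
      rw [integral_indicator measurableSet_Iic, setIntegral_const, smul_eq_mul, mul_one]
      rfl
    simp only [h1, one_mul] at h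
    rw [integral_sub hone hF, integral_const] at h
    simp only [probReal_univ, smul_eq_mul, mul_one] at h
    linarith
  -- The inner integral of `|x - y|`, obtained from the pointwise decomposition.
  have hinner : ∀ x : ℝ, ∫ y, |x - y| ∂μ
      = 2 * (x * (μ (Set.Iic x)).toReal)
        - 2 * (∫ y, (Set.Iic x).indicator (fun y : ℝ => y) y ∂μ) - x + ∫ y, y ∂μ := fun x => by
    have hp : ∀ y : ℝ, |x - y| = 2 * (Set.Iic x).indicator (fun _ : ℝ => x) y
        - 2 * (Set.Iic x).indicator (fun y : ℝ => y) y - x + y := fun y => by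
      by_cases hy : y ≤ x
      · simp only [Set.indicator_apply, Set.mem_Iic, hy, if_true]
        rw [abs_of_nonneg (by linarith)]
        ring
      · simp only [Set.indicator_apply, Set.mem_Iic, hy, if_false]
        rw [abs_of_nonpos (by linarith)]
        ring
    have i1 : Integrable (fun y => 2 * (Set.Iic x).indicator (fun _ : ℝ => x) y) μ :=
      ((integrable_const x).indicator measurableSet_Iic).const_mul 2
    have i2 : Integrable (fun y => 2 * (Set.Iic x).indicator (fun y : ℝ => y) y) μ :=
      (hint.indicator measurableSet_Iic).const_mul 2
    have hc : ∫ y, (Set.Iic x).indicator (fun _ : ℝ => x) y ∂μ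
        = x * (μ (Set.Iic x)).toReal := by
      rw [integral_indicator measurableSet_Iic, setIntegral_const, smul_eq_mul, mul_comm]
      rfl
    simp only [hp]
    rw [integral_add ((i1.sub' i2).sub' (integrable_const x)) hint,
      integral_sub (i1.sub' i2) (integrable_const x), integral_sub i1 i2,
      integral_const_mul, integral_const_mul, hc]
    simp
  have hmain : (∫ x, ∫ y, |x - y| ∂μ ∂μ)
      = 4 * ∫ x, x * (μ (Set.Iic x)).toReal ∂μ - 2 * ∫ x, x ∂μ := by
    have h := integral_integral_indicator_Iic μ hatoms hint
    have h2 : ∫ y, y * (1 - (μ (Set.Iic y)).toReal) ∂μ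
        = ∫ y, y ∂μ - ∫ y, y * (μ (Set.Iic y)).toReal ∂μ := by
      rw [← integral_sub hint hxF]
      congr 1 with y
      ring
    have j1 := hxF.const_mul 2
    have j2 : Integrable
        (fun x => 2 * ∫ y, (Set.Iic x).indicator (fun y : ℝ => y) y ∂μ) μ :=
      (integrable_prod_indicator_Iic μ hint).integral_prod_left.const_mul 2
    simp only [hinner]
    rw [integral_add ((j1.sub' j2).sub' hint) (integrable_const _),
      integral_sub (j1.sub' j2) hint, integral_sub j1 j2,
      integral_const_mul, integral_const_mul, h, h2, integral_const]
    simp only [probReal_univ, smul_eq_mul]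
    ring
  refine ⟨hmain, hhalf, ?_⟩
  rw [hmain, hhalf]
  ring
end

section
/- Let n : ℕ, let v : Fin n → ℝ be data points, and let x : ℝ with x ≠ v i for every i : Fin n. Then the function u ↦ ∑_{i : Fin n} |u − v i| is differentiable at x with derivative 2 * m − n, where m is the number of indices i with v i ≤ x: HasDerivAt (fun u => ∑ i, |u − v i|) (2 * (m : ℝ) − n) x. (Equivalently, the gradient of the empirical L1 distance n·d_1(x, 𝐱) equals n(2·F̂_n(x) − 1), where F̂_n is the empirical c.d.f. based on ranks.) -/
/-- The gradient of the empirical L1 distance: at any point `x` distinct from all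
data points `v i`, the function `u ↦ ∑ i, |u − v i|` has derivative `2m − n`,
where `m` is the number of data points `≤ x`. -/
theorem hasDerivAt_empirical_L1_dist (n : ℕ) (v : Fin n → ℝ) (x : ℝ)
    (hx : ∀ i : Fin n, x ≠ v i) :
    HasDerivAt (fun u : ℝ => ∑ i : Fin n, |u - v i|)
      (2 * ((Finset.univ.filter (fun i : Fin n => v i ≤ x)).card : ℝ) - n) x := by
  -- Each summand has slope `±1 = 2 * 𝟙[v i ≤ x] - 1`; the indicators add up to the count.
  have hterm : ∀ i ∈ (Finset.univ : Finset (Fin n)),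
      HasDerivAt (fun u : ℝ => |u - v i|) (2 * (if v i ≤ x then (1 : ℝ) else 0) - 1) x := by
    intro i _
    rcases lt_or_gt_of_ne (hx i) with h | h
    · have hd := (hasDerivAt_abs_neg (sub_neg.2 h)).comp_sub_const x (v i)
      rwa [if_neg (not_le.2 h), mul_zero, zero_sub]
    · have hd := (hasDerivAt_abs_pos (sub_pos.2 h)).comp_sub_const x (v i)
      rwa [if_pos h.le, mul_one, show (2 : ℝ) - 1 = 1 by norm_num]
  refine (HasDerivAt.fun_sum hterm).congr_deriv ?_
  rw [Finset.sum_sub_distrib, ← Finset.mul_sum, Finset.sum_boole]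
  simp
end
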